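/- (Additivity on independent systems.) Let P₁ be a joint distribution on 𝒳₁ × 𝒴₁ × 𝒵₁ and P₂ a joint distribution on 𝒳₂ × 𝒴₂ × 𝒵₂, and let P be the product distribution on (𝒳₁ × 𝒳₂) × (𝒴₁ × 𝒴₂) × (𝒵₁ × 𝒵₂) defined by P((x₁,x₂),(y₁,y₂),(z₁,z₂)) = P₁(x₁,y₁,z₁)·P₂(x₂,y₂,z₂) (this models (X₁,Y₁,Z₁) independent of (X₂,Y₂,Z₂)). Then S̃I, C̃I, ŨI(·∖·) are additive: S̃I computed for P equals S̃I for P₁ plus S̃I for P₂, C̃I for P equals C̃I for P₁ plus C̃I for P₂, ŨI((X₁,X₂):(Y₁,Y₂)∖(Z₁,Z₂)) = ŨI(X₁:Y₁∖Z₁) + ŨI(X₂:Y₂∖Z₂), and ŨI((X₁,X₂):(Z₁,Z₂)∖(Y₁,Y₂)) = ŨI(X₁:Z₁∖Y₁) + ŨI(X₂:Z₂∖Y₂). -/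

import Mathlib

/-! Additivity of `S̃I`, `C̃I` and `ŨI` on independent systems.

On `Δ_P` the `(X,Y)`- and `(X,Z)`-marginals are fixed, so each of `MI_Q(X:Y|Z)`, `MI_Q(X:Z|Y)`,
`MI_Q(X:(Y,Z))` and `CoI_Q(X;Y;Z)` equals a constant depending only on those marginals, plus or
minus `H_Q(X|Y,Z)` (`miXY_Z_eq`, `miXZ_Y_eq`, `miXYZ_eq`). Hence all four quantities are affine in
the single number `maxH P = sup_{Q ∈ Δ_P} H_Q(X|Y,Z)`, with constant terms that are entropies or
mutual informations of `P` itself, and these are additive for a product distribution because the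
logarithm of a product splits (`sum_mul_log_prod`).

Additivity of `maxH` (`maxH_prod`) has two halves. Products of elements of `Δ_{P₁}` and `Δ_{P₂}` lie
in `Δ_P`, which gives `≥`. Conversely an arbitrary `Q ∈ Δ_P` has marginals `fstM Q ∈ Δ_{P₁}` and
`sndM Q ∈ Δ_{P₂}`, and conditional entropy is subadditive,
`H_Q(X₁X₂|Y₁Y₂Z₁Z₂) ≤ H_Q(X₁|Y₁Z₁) + H_Q(X₂|Y₂Z₂)` (`hX_YZ_le`, from Gibbs' inequality). -/

open scoped BigOperators
open Real

namespace PID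

variable {𝒳 𝒴 𝒵 : Type*} [Fintype 𝒳] [Fintype 𝒴] [Fintype 𝒵]

/-- A joint distribution on `𝒳 × 𝒴 × 𝒵`: nonnegative values summing to 1. -/
def IsDist (P : 𝒳 × 𝒴 × 𝒵 → ℝ) : Prop :=
  (∀ p, 0 ≤ P p) ∧ ∑ p, P p = 1

noncomputable def margX (P : 𝒳 × 𝒴 × 𝒵 → ℝ) (x : 𝒳) : ℝ := ∑ y, ∑ z, P (x, y, z)
noncomputable def margY (P : 𝒳 × 𝒴 × 𝒵 → ℝ) (y : 𝒴) : ℝ := ∑ x, ∑ z, P (x, y, z)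
noncomputable def margZ (P : 𝒳 × 𝒴 × 𝒵 → ℝ) (z : 𝒵) : ℝ := ∑ x, ∑ y, P (x, y, z)
noncomputable def margXY (P : 𝒳 × 𝒴 × 𝒵 → ℝ) (x : 𝒳) (y : 𝒴) : ℝ := ∑ z, P (x, y, z)
noncomputable def margXZ (P : 𝒳 × 𝒴 × 𝒵 → ℝ) (x : 𝒳) (z : 𝒵) : ℝ := ∑ y, P (x, y, z)
noncomputable def margYZ (P : 𝒳 × 𝒴 × 𝒵 → ℝ) (y : 𝒴) (z : 𝒵) : ℝ := ∑ x, P (x, y, z)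

/-- Mutual information `MI(X:Y)`. -/
noncomputable def miXY (P : 𝒳 × 𝒴 × 𝒵 → ℝ) : ℝ :=
  ∑ x, ∑ y, margXY P x y * Real.log (margXY P x y / (margX P x * margY P y))

/-- Mutual information `MI(X:Z)`. -/
noncomputable def miXZ (P : 𝒳 × 𝒴 × 𝒵 → ℝ) : ℝ :=
  ∑ x, ∑ z, margXZ P x z * Real.log (margXZ P x z / (margX P x * margZ P z))

/-- Mutual information `MI(Y:Z)`. -/
noncomputable def miYZ (P : 𝒳 × 𝒴 × 𝒵 → ℝ) : ℝ :=
  ∑ y, ∑ z, margYZ P y z * Real.log (margYZ P y z / (margY P y * margZ P z))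

/-- Mutual information `MI(X:(Y,Z))`. -/
noncomputable def miXYZ (P : 𝒳 × 𝒴 × 𝒵 → ℝ) : ℝ :=
  ∑ x, ∑ y, ∑ z, P (x, y, z) * Real.log (P (x, y, z) / (margX P x * margYZ P y z))

/-- Conditional mutual information `MI(X:Y|Z)`. -/
noncomputable def miXY_Z (P : 𝒳 × 𝒴 × 𝒵 → ℝ) : ℝ :=
  ∑ x, ∑ y, ∑ z, P (x, y, z) *
    Real.log (P (x, y, z) * margZ P z / (margXZ P x z * margYZ P y z))

/-- Conditional mutual information `MI(X:Z|Y)`. -/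
noncomputable def miXZ_Y (P : 𝒳 × 𝒴 × 𝒵 → ℝ) : ℝ :=
  ∑ x, ∑ y, ∑ z, P (x, y, z) *
    Real.log (P (x, y, z) * margY P y / (margXY P x y * margYZ P y z))

/-- Conditional mutual information `MI(Y:Z|X)`. -/
noncomputable def miYZ_X (P : 𝒳 × 𝒴 × 𝒵 → ℝ) : ℝ :=
  ∑ x, ∑ y, ∑ z, P (x, y, z) *
    Real.log (P (x, y, z) * margX P x / (margXY P x y * margXZ P x z))

/-- Conditional entropy `H(X|Y,Z)`. -/
noncomputable def hX_YZ (P : 𝒳 × 𝒴 × 𝒵 → ℝ) : ℝ :=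
  -∑ x, ∑ y, ∑ z, P (x, y, z) * Real.log (P (x, y, z) / margYZ P y z)

/-- Conditional entropy `H(X|Z)`. -/
noncomputable def hX_Z (P : 𝒳 × 𝒴 × 𝒵 → ℝ) : ℝ :=
  -∑ x, ∑ z, margXZ P x z * Real.log (margXZ P x z / margZ P z)

/-- Conditional entropy `H(Y|Z)`. -/
noncomputable def hY_Z (P : 𝒳 × 𝒴 × 𝒵 → ℝ) : ℝ :=
  -∑ y, ∑ z, margYZ P y z * Real.log (margYZ P y z / margZ P z)

/-- Conditional entropy `H(Z|Y)`. -/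
noncomputable def hZ_Y (P : 𝒳 × 𝒴 × 𝒵 → ℝ) : ℝ :=
  -∑ y, ∑ z, margYZ P y z * Real.log (margYZ P y z / margY P y)

/-- Co-information `CoI(X;Y;Z) = MI(X:Y) − MI(X:Y|Z)`. -/
noncomputable def coI (P : 𝒳 × 𝒴 × 𝒵 → ℝ) : ℝ := miXY P - miXY_Z P

/-- `Δ_P`: the joint distributions with the same pair marginals as `P` on `(X,Y)` and `(X,Z)`. -/
def ΔP (P : 𝒳 × 𝒴 × 𝒵 → ℝ) : Set (𝒳 × 𝒴 × 𝒵 → ℝ) :=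
  {Q | IsDist Q ∧ (∀ x y, margXY Q x y = margXY P x y) ∧ ∀ x z, margXZ Q x z = margXZ P x z}

/-- `ŨI(X:Y∖Z) = min_{Q ∈ Δ_P} MI_Q(X:Y|Z)`. -/
noncomputable def UIY (P : 𝒳 × 𝒴 × 𝒵 → ℝ) : ℝ := sInf (miXY_Z '' ΔP P)

/-- `ŨI(X:Z∖Y) = min_{Q ∈ Δ_P} MI_Q(X:Z|Y)`. -/
noncomputable def UIZ (P : 𝒳 × 𝒴 × 𝒵 → ℝ) : ℝ := sInf (miXZ_Y '' ΔP P)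

/-- `S̃I(X:Y;Z) = max_{Q ∈ Δ_P} CoI_Q(X;Y;Z)`. -/
noncomputable def SI (P : 𝒳 × 𝒴 × 𝒵 → ℝ) : ℝ := sSup (coI '' ΔP P)

/-- `C̃I(X:Y;Z) = MI_P(X:(Y,Z)) − min_{Q ∈ Δ_P} MI_Q(X:(Y,Z))`. -/
noncomputable def CI (P : 𝒳 × 𝒴 × 𝒵 → ℝ) : ℝ := miXYZ P - sInf (miXYZ '' ΔP P)

set_option linter.unusedSectionVars false

/-! ### Marginals of a distribution -/

section Basic

variable {Q P : 𝒳 × 𝒴 × 𝒵 → ℝ}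

lemma margXZ_nonneg (hQ : IsDist Q) (x : 𝒳) (z : 𝒵) : 0 ≤ margXZ Q x z :=
  Finset.sum_nonneg fun _ _ => hQ.1 _

lemma margXY_nonneg (hQ : IsDist Q) (x : 𝒳) (y : 𝒴) : 0 ≤ margXY Q x y :=
  Finset.sum_nonneg fun _ _ => hQ.1 _

lemma margYZ_nonneg (hQ : IsDist Q) (y : 𝒴) (z : 𝒵) : 0 ≤ margYZ Q y z :=
  Finset.sum_nonneg fun _ _ => hQ.1 _

lemma le_margXY (hQ : IsDist Q) (x : 𝒳) (y : 𝒴) (z : 𝒵) : Q (x, y, z) ≤ margXY Q x y :=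
  Finset.single_le_sum (f := fun z => Q (x, y, z)) (fun _ _ => hQ.1 _) (Finset.mem_univ z)

lemma le_margXZ (hQ : IsDist Q) (x : 𝒳) (y : 𝒴) (z : 𝒵) : Q (x, y, z) ≤ margXZ Q x z :=
  Finset.single_le_sum (f := fun y => Q (x, y, z)) (fun _ _ => hQ.1 _) (Finset.mem_univ y)

lemma le_margYZ (hQ : IsDist Q) (x : 𝒳) (y : 𝒴) (z : 𝒵) : Q (x, y, z) ≤ margYZ Q y z :=
  Finset.single_le_sum (f := fun x => Q (x, y, z)) (fun _ _ => hQ.1 _) (Finset.mem_univ x)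

lemma margX_eq (Q : 𝒳 × 𝒴 × 𝒵 → ℝ) (x : 𝒳) : margX Q x = ∑ y, margXY Q x y := rfl

lemma margY_eq (Q : 𝒳 × 𝒴 × 𝒵 → ℝ) (y : 𝒴) : margY Q y = ∑ x, margXY Q x y := rfl

lemma margZ_eq (Q : 𝒳 × 𝒴 × 𝒵 → ℝ) (z : 𝒵) : margZ Q z = ∑ x, margXZ Q x z := rfl

lemma margXY_le_margX (hQ : IsDist Q) (x : 𝒳) (y : 𝒴) : margXY Q x y ≤ margX Q x :=
  Finset.single_le_sum (f := fun y => margXY Q x y) (fun _ _ => margXY_nonneg hQ _ _)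
    (Finset.mem_univ y)

lemma margXY_le_margY (hQ : IsDist Q) (x : 𝒳) (y : 𝒴) : margXY Q x y ≤ margY Q y :=
  Finset.single_le_sum (f := fun x => margXY Q x y) (fun _ _ => margXY_nonneg hQ _ _)
    (Finset.mem_univ x)

lemma margXZ_le_margZ (hQ : IsDist Q) (x : 𝒳) (z : 𝒵) : margXZ Q x z ≤ margZ Q z :=
  Finset.single_le_sum (f := fun x => margXZ Q x z) (fun _ _ => margXZ_nonneg hQ _ _)
    (Finset.mem_univ x)

lemma sum_margXY (hQ : IsDist Q) : ∑ x, ∑ y, margXY Q x y = 1 := by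
  rw [← hQ.2]; simp only [Fintype.sum_prod_type]; rfl

lemma sum_margXZ (hQ : IsDist Q) : ∑ x, ∑ z, margXZ Q x z = 1 := by
  rw [← hQ.2]; simp only [Fintype.sum_prod_type, margXZ]
  exact Finset.sum_congr rfl fun x _ => Finset.sum_comm

lemma sum_margYZ (hQ : IsDist Q) : ∑ y, ∑ z, margYZ Q y z = 1 := by
  rw [← hQ.2]; simp only [Fintype.sum_prod_type, margYZ]
  rw [Finset.sum_comm (s := (Finset.univ : Finset 𝒳))]
  exact Finset.sum_congr rfl fun y _ => Finset.sum_comm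

/-! ### Information quantities in terms of `H(X|Y,Z)` -/

/-- Conditional entropy `H(X|Y)`. -/
noncomputable def hX_Y (P : 𝒳 × 𝒴 × 𝒵 → ℝ) : ℝ :=
  -∑ x, ∑ y, margXY P x y * Real.log (margXY P x y / margY P y)

/-- Entropy `H(X)`. -/
noncomputable def hX (P : 𝒳 × 𝒴 × 𝒵 → ℝ) : ℝ :=
  -∑ x, margX P x * Real.log (margX P x)

lemma miXY_Z_eq (hQ : IsDist Q) : miXY_Z Q = hX_Z Q - hX_YZ Q := by
  have h : hX_Z Q = -∑ x, ∑ y, ∑ z, Q (x, y, z) * Real.log (margXZ Q x z / margZ Q z) := by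
    unfold hX_Z
    congr 1
    refine Finset.sum_congr rfl fun x _ => ?_
    rw [Finset.sum_comm]
    exact Finset.sum_congr rfl fun z _ => Finset.sum_mul _ _ _
  rw [h, hX_YZ, miXY_Z, sub_neg_eq_add, neg_add_eq_sub]
  simp only [← Finset.sum_sub_distrib]
  refine Finset.sum_congr rfl fun x _ => Finset.sum_congr rfl fun y _ =>
    Finset.sum_congr rfl fun z _ => ?_
  rcases (hQ.1 (x, y, z)).eq_or_lt with h0 | h0
  · simp [← h0]
  have h1 := h0.trans_le (le_margXZ hQ x y z)
  have h2 := h0.trans_le (le_margYZ hQ x y z)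
  have h3 := h1.trans_le (margXZ_le_margZ hQ x z)
  rw [Real.log_div (by positivity) (by positivity), Real.log_div (by positivity) (by positivity),
    Real.log_div (by positivity) (by positivity), Real.log_mul (by positivity) (by positivity),
    Real.log_mul (by positivity) (by positivity)]
  ring

lemma miXZ_Y_eq (hQ : IsDist Q) : miXZ_Y Q = hX_Y Q - hX_YZ Q := by
  have h : hX_Y Q = -∑ x, ∑ y, ∑ z, Q (x, y, z) * Real.log (margXY Q x y / margY Q y) := by
    unfold hX_Y
    congr 1
    exact Finset.sum_congr rfl fun x _ => Finset.sum_congr rfl fun z _ => Finset.sum_mul _ _ _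
  rw [h, hX_YZ, miXZ_Y, sub_neg_eq_add, neg_add_eq_sub]
  simp only [← Finset.sum_sub_distrib]
  refine Finset.sum_congr rfl fun x _ => Finset.sum_congr rfl fun y _ =>
    Finset.sum_congr rfl fun z _ => ?_
  rcases (hQ.1 (x, y, z)).eq_or_lt with h0 | h0
  · simp [← h0]
  have h1 := h0.trans_le (le_margXY hQ x y z)
  have h2 := h0.trans_le (le_margYZ hQ x y z)
  have h3 := h1.trans_le (margXY_le_margY hQ x y)
  rw [Real.log_div (by positivity) (by positivity), Real.log_div (by positivity) (by positivity),
    Real.log_div (by positivity) (by positivity), Real.log_mul (by positivity) (by positivity),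
    Real.log_mul (by positivity) (by positivity)]
  ring

lemma miXYZ_eq (hQ : IsDist Q) : miXYZ Q = hX Q - hX_YZ Q := by
  have h : hX Q = -∑ x, ∑ y, ∑ z, Q (x, y, z) * Real.log (margX Q x) := by
    unfold hX
    congr 1
    refine Finset.sum_congr rfl fun x _ => ?_
    simp only [← Finset.sum_mul]
    rfl
  rw [h, hX_YZ, miXYZ, sub_neg_eq_add, neg_add_eq_sub]
  simp only [← Finset.sum_sub_distrib]
  refine Finset.sum_congr rfl fun x _ => Finset.sum_congr rfl fun y _ =>
    Finset.sum_congr rfl fun z _ => ?_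
  rcases (hQ.1 (x, y, z)).eq_or_lt with h0 | h0
  · simp [← h0]
  have h1 := h0.trans_le (le_margXY hQ x y z)
  have h2 := h0.trans_le (le_margYZ hQ x y z)
  have h3 := h1.trans_le (margXY_le_margX hQ x y)
  rw [Real.log_div (by positivity) (by positivity), Real.log_div (by positivity) (by positivity),
    Real.log_mul (by positivity) (by positivity)]
  ring

lemma self_mem_ΔP (hP : IsDist P) : P ∈ ΔP P := ⟨hP, fun _ _ => rfl, fun _ _ => rfl⟩

lemma hX_Z_congr (h : Q ∈ ΔP P) : hX_Z Q = hX_Z P := by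
  simp only [hX_Z, margZ_eq, h.2.2]

lemma hX_Y_congr (h : Q ∈ ΔP P) : hX_Y Q = hX_Y P := by
  simp only [hX_Y, margY_eq, h.2.1]

lemma hX_congr (h : Q ∈ ΔP P) : hX Q = hX P := by
  simp only [hX, margX_eq, h.2.1]

lemma miXY_congr (h : Q ∈ ΔP P) : miXY Q = miXY P := by
  simp only [miXY, margX_eq, margY_eq, h.2.1]

/-- The crude bound `H(X|Y,Z) ≤ |𝒳|`, which makes the supremum over `Δ_P` meaningful. -/
lemma hX_YZ_le_card (hQ : IsDist Q) : hX_YZ Q ≤ Fintype.card 𝒳 := by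
  have hs : (Fintype.card 𝒳 : ℝ) = ∑ _x : 𝒳, ∑ y, ∑ z, margYZ Q y z := by
    simp [sum_margYZ hQ]
  rw [hs, hX_YZ]
  simp only [← Finset.sum_neg_distrib]
  refine Finset.sum_le_sum fun x _ => Finset.sum_le_sum fun y _ => Finset.sum_le_sum fun z _ => ?_
  rcases (hQ.1 (x, y, z)).eq_or_lt with h0 | h0
  · simpa [← h0] using margYZ_nonneg hQ y z
  have h2 := h0.trans_le (le_margYZ hQ x y z)
  -- `-log t ≤ t⁻¹ - 1` at `t = Q / margYZ`
  have h3 := Real.one_sub_inv_le_log_of_pos (div_pos h0 h2)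
  have h4 := mul_le_mul_of_nonneg_left h3 h0.le
  have h5 : Q (x, y, z) * (1 - (Q (x, y, z) / margYZ Q y z)⁻¹) = Q (x, y, z) - margYZ Q y z := by
    field_simp
  linarith

/-- The largest conditional entropy `H_Q(X|Y,Z)` over `Q ∈ Δ_P`. -/
noncomputable def maxH (P : 𝒳 × 𝒴 × 𝒵 → ℝ) : ℝ := sSup (hX_YZ '' ΔP P)

lemma isLUB_maxH (hP : IsDist P) : IsLUB (hX_YZ '' ΔP P) (maxH P) := by
  refine isLUB_csSup ⟨_, P, self_mem_ΔP hP, rfl⟩ ⟨Fintype.card 𝒳, ?_⟩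
  rintro _ ⟨Q, hQ, rfl⟩
  exact hX_YZ_le_card hQ.1

/-- A function equal to `c - H(X|Y,Z)` on `Δ_P` has infimum `c - maxH P` there. -/
lemma sInf_image_eq (hP : IsDist P) {f : (𝒳 × 𝒴 × 𝒵 → ℝ) → ℝ} {c : ℝ}
    (hf : ∀ Q ∈ ΔP P, f Q = c - hX_YZ Q) : sInf (f '' ΔP P) = c - maxH P := by
  have hL := isLUB_maxH hP
  refine IsGLB.csInf_eq ⟨?_, ?_⟩ ⟨_, P, self_mem_ΔP hP, rfl⟩
  · rintro _ ⟨Q, hQ, rfl⟩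
    rw [hf Q hQ]
    linarith [hL.1 ⟨Q, hQ, rfl⟩]
  · intro b hb
    have : maxH P ≤ c - b := hL.2 (by
      rintro _ ⟨Q, hQ, rfl⟩
      have := hb ⟨Q, hQ, rfl⟩
      rw [hf Q hQ] at this
      linarith)
    linarith

lemma UIY_eq (hP : IsDist P) : UIY P = hX_Z P - maxH P :=
  sInf_image_eq hP fun Q hQ => by rw [miXY_Z_eq hQ.1, hX_Z_congr hQ]

lemma UIZ_eq (hP : IsDist P) : UIZ P = hX_Y P - maxH P :=
  sInf_image_eq hP fun Q hQ => by rw [miXZ_Y_eq hQ.1, hX_Y_congr hQ]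

lemma CI_eq (hP : IsDist P) : CI P = maxH P - hX_YZ P := by
  have h : sInf (miXYZ '' ΔP P) = hX P - maxH P :=
    sInf_image_eq hP fun Q hQ => by rw [miXYZ_eq hQ.1, hX_congr hQ]
  rw [CI, h, miXYZ_eq hP]
  ring

lemma SI_eq (hP : IsDist P) : SI P = miXY P - hX_Z P + maxH P := by
  have hL := isLUB_maxH hP
  have hf : ∀ Q ∈ ΔP P, coI Q = miXY P - hX_Z P + hX_YZ Q := fun Q hQ => by
    rw [coI, miXY_Z_eq hQ.1, hX_Z_congr hQ, miXY_congr hQ]; ring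
  refine IsLUB.csSup_eq ⟨?_, ?_⟩ ⟨_, P, self_mem_ΔP hP, rfl⟩
  · rintro _ ⟨Q, hQ, rfl⟩
    rw [hf Q hQ]
    linarith [hL.1 ⟨Q, hQ, rfl⟩]
  · intro b hb
    have : maxH P ≤ b - (miXY P - hX_Z P) := hL.2 (by
      rintro _ ⟨Q, hQ, rfl⟩
      have := hb ⟨Q, hQ, rfl⟩
      rw [hf Q hQ] at this
      linarith)
    linarith

end Basic

/-! ### Product distributions -/

/-- Additivity of the relative-entropy-like sum `∑ q log (q / m)` for product weights. -/
lemma sum_mul_log_prod {I J : Type*} [Fintype I] [Fintype J] {q₁ m₁ : I → ℝ} {q₂ m₂ : J → ℝ}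
    (h₁ : ∑ i, q₁ i = 1) (h₂ : ∑ j, q₂ j = 1)
    (hm₁ : ∀ i, q₁ i ≠ 0 → m₁ i ≠ 0) (hm₂ : ∀ j, q₂ j ≠ 0 → m₂ j ≠ 0) :
    ∑ i, ∑ j, q₁ i * q₂ j * Real.log (q₁ i * q₂ j / (m₁ i * m₂ j)) =
      ∑ i, q₁ i * Real.log (q₁ i / m₁ i) + ∑ j, q₂ j * Real.log (q₂ j / m₂ j) := by
  have h : ∀ i j, q₁ i * q₂ j * Real.log (q₁ i * q₂ j / (m₁ i * m₂ j)) =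
      q₁ i * Real.log (q₁ i / m₁ i) * q₂ j + q₁ i * (q₂ j * Real.log (q₂ j / m₂ j)) := by
    intro i j
    by_cases hi : q₁ i = 0
    · simp [hi]
    by_cases hj : q₂ j = 0
    · simp [hj]
    rw [mul_div_mul_comm, Real.log_mul (div_ne_zero hi (hm₁ i hi)) (div_ne_zero hj (hm₂ j hj))]
    ring
  simp only [h, Finset.sum_add_distrib, ← Finset.mul_sum, ← Finset.sum_mul, h₁, h₂, mul_one,
    one_mul]

section Product

variable {𝒳₁ 𝒴₁ 𝒵₁ 𝒳₂ 𝒴₂ 𝒵₂ : Type*}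
    [Fintype 𝒳₁] [Fintype 𝒴₁] [Fintype 𝒵₁] [Fintype 𝒳₂] [Fintype 𝒴₂] [Fintype 𝒵₂]

/-- Regroups a sum over pairs of composite variables by system. -/
lemma sum_regroup₂ (F : 𝒳₁ × 𝒳₂ → 𝒴₁ × 𝒴₂ → ℝ) :
    ∑ x, ∑ y, F x y = ∑ p : 𝒳₁ × 𝒴₁, ∑ q : 𝒳₂ × 𝒴₂, F (p.1, q.1) (p.2, q.2) := by
  rw [← Fintype.sum_prod_type', ← Fintype.sum_prod_type']
  exact Fintype.sum_equiv (Equiv.prodProdProdComm 𝒳₁ 𝒳₂ 𝒴₁ 𝒴₂) _ _ fun _ => rfl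

/-- Regroups a sum over triples of composite variables by system. -/
lemma sum_regroup₃ (F : 𝒳₁ × 𝒳₂ → 𝒴₁ × 𝒴₂ → 𝒵₁ × 𝒵₂ → ℝ) :
    ∑ x, ∑ y, ∑ z, F x y z = ∑ p : 𝒳₁ × 𝒴₁ × 𝒵₁, ∑ q : 𝒳₂ × 𝒴₂ × 𝒵₂,
      F (p.1, q.1) (p.2.1, q.2.1) (p.2.2, q.2.2) := by
  have h : ∀ x, ∑ y, ∑ z, F x y z = ∑ w : (𝒴₁ × 𝒵₁) × (𝒴₂ × 𝒵₂),
      F x (w.1.1, w.2.1) (w.1.2, w.2.2) := fun x => by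
    rw [sum_regroup₂, ← Fintype.sum_prod_type']
  simp only [h]
  exact sum_regroup₂ fun x
    (w : (𝒴₁ × 𝒵₁) × (𝒴₂ × 𝒵₂)) => F x (w.1.1, w.2.1) (w.1.2, w.2.2)

/-- The joint distribution of two independent systems. -/
def prodD (Q₁ : 𝒳₁ × 𝒴₁ × 𝒵₁ → ℝ) (Q₂ : 𝒳₂ × 𝒴₂ × 𝒵₂ → ℝ) :
    (𝒳₁ × 𝒳₂) × (𝒴₁ × 𝒴₂) × 𝒵₁ × 𝒵₂ → ℝ :=
  fun p => Q₁ (p.1.1, p.2.1.1, p.2.2.1) * Q₂ (p.1.2, p.2.1.2, p.2.2.2)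

variable {Q₁ P₁ : 𝒳₁ × 𝒴₁ × 𝒵₁ → ℝ} {Q₂ P₂ : 𝒳₂ × 𝒴₂ × 𝒵₂ → ℝ}

lemma margXY_prodD (x : 𝒳₁ × 𝒳₂) (y : 𝒴₁ × 𝒴₂) :
    margXY (prodD Q₁ Q₂) x y = margXY Q₁ x.1 y.1 * margXY Q₂ x.2 y.2 := by
  simp only [margXY, prodD, Fintype.sum_mul_sum, Fintype.sum_prod_type]

lemma margXZ_prodD (x : 𝒳₁ × 𝒳₂) (z : 𝒵₁ × 𝒵₂) :
    margXZ (prodD Q₁ Q₂) x z = margXZ Q₁ x.1 z.1 * margXZ Q₂ x.2 z.2 := by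
  simp only [margXZ, prodD, Fintype.sum_mul_sum, Fintype.sum_prod_type]

lemma margYZ_prodD (y : 𝒴₁ × 𝒴₂) (z : 𝒵₁ × 𝒵₂) :
    margYZ (prodD Q₁ Q₂) y z = margYZ Q₁ y.1 z.1 * margYZ Q₂ y.2 z.2 := by
  simp only [margYZ, prodD, Fintype.sum_mul_sum, Fintype.sum_prod_type]

lemma margX_prodD (x : 𝒳₁ × 𝒳₂) :
    margX (prodD Q₁ Q₂) x = margX Q₁ x.1 * margX Q₂ x.2 := by
  simp only [margX_eq, margXY_prodD, Fintype.sum_mul_sum, Fintype.sum_prod_type]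

lemma margY_prodD (y : 𝒴₁ × 𝒴₂) :
    margY (prodD Q₁ Q₂) y = margY Q₁ y.1 * margY Q₂ y.2 := by
  simp only [margY_eq, margXY_prodD, Fintype.sum_mul_sum, Fintype.sum_prod_type]

lemma margZ_prodD (z : 𝒵₁ × 𝒵₂) :
    margZ (prodD Q₁ Q₂) z = margZ Q₁ z.1 * margZ Q₂ z.2 := by
  simp only [margZ_eq, margXZ_prodD, Fintype.sum_mul_sum, Fintype.sum_prod_type]

lemma isDist_prodD (h₁ : IsDist Q₁) (h₂ : IsDist Q₂) : IsDist (prodD Q₁ Q₂) := by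
  refine ⟨fun p => mul_nonneg (h₁.1 _) (h₂.1 _), ?_⟩
  have h := sum_regroup₃ fun x y z => prodD Q₁ Q₂ (x, y, z)
  rw [Fintype.sum_prod_type]
  simp only [Fintype.sum_prod_type (f := fun w => prodD Q₁ Q₂ (_, w))]
  rw [h]
  simp only [prodD, Prod.mk.eta, ← Fintype.sum_mul_sum, h₁.2, h₂.2, mul_one]

lemma prodD_mem_ΔP (h₁ : Q₁ ∈ ΔP P₁) (h₂ : Q₂ ∈ ΔP P₂) : prodD Q₁ Q₂ ∈ ΔP (prodD P₁ P₂) := by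
  refine ⟨isDist_prodD h₁.1 h₂.1, fun x y => ?_, fun x z => ?_⟩
  · rw [margXY_prodD, margXY_prodD, h₁.2.1, h₂.2.1]
  · rw [margXZ_prodD, margXZ_prodD, h₁.2.2, h₂.2.2]

lemma ne_zero_of_le {a b : ℝ} (ha : 0 ≤ a) (hab : a ≤ b) (h : a ≠ 0) : b ≠ 0 :=
  ((ha.lt_of_ne' h).trans_le hab).ne'

lemma hX_YZ_prodD (h₁ : IsDist Q₁) (h₂ : IsDist Q₂) :
    hX_YZ (prodD Q₁ Q₂) = hX_YZ Q₁ + hX_YZ Q₂ := by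
  have h := sum_mul_log_prod (m₁ := fun p : 𝒳₁ × 𝒴₁ × 𝒵₁ => margYZ Q₁ p.2.1 p.2.2)
    (m₂ := fun p : 𝒳₂ × 𝒴₂ × 𝒵₂ => margYZ Q₂ p.2.1 p.2.2) h₁.2 h₂.2
    (fun p => ne_zero_of_le (h₁.1 p) (le_margYZ h₁ _ _ _))
    (fun p => ne_zero_of_le (h₂.1 p) (le_margYZ h₂ _ _ _))
  rw [hX_YZ, sum_regroup₃]
  simp only [hX_YZ, margYZ_prodD, ← neg_add]
  congr 1
  refine Eq.trans h ?_
  simp only [Fintype.sum_prod_type]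

lemma hX_Z_prodD (h₁ : IsDist Q₁) (h₂ : IsDist Q₂) :
    hX_Z (prodD Q₁ Q₂) = hX_Z Q₁ + hX_Z Q₂ := by
  have h := sum_mul_log_prod (q₁ := fun p : 𝒳₁ × 𝒵₁ => margXZ Q₁ p.1 p.2)
    (q₂ := fun p : 𝒳₂ × 𝒵₂ => margXZ Q₂ p.1 p.2)
    (m₁ := fun p => margZ Q₁ p.2) (m₂ := fun p => margZ Q₂ p.2)
    (by rw [Fintype.sum_prod_type, sum_margXZ h₁]) (by rw [Fintype.sum_prod_type, sum_margXZ h₂])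
    (fun p => ne_zero_of_le (margXZ_nonneg h₁ _ _) (margXZ_le_margZ h₁ _ _))
    (fun p => ne_zero_of_le (margXZ_nonneg h₂ _ _) (margXZ_le_margZ h₂ _ _))
  rw [hX_Z, sum_regroup₂]
  simp only [hX_Z, margXZ_prodD, margZ_prodD, ← neg_add]
  congr 1
  refine Eq.trans h ?_
  simp only [Fintype.sum_prod_type]

lemma hX_Y_prodD (h₁ : IsDist Q₁) (h₂ : IsDist Q₂) :
    hX_Y (prodD Q₁ Q₂) = hX_Y Q₁ + hX_Y Q₂ := by
  have h := sum_mul_log_prod (q₁ := fun p : 𝒳₁ × 𝒴₁ => margXY Q₁ p.1 p.2)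
    (q₂ := fun p : 𝒳₂ × 𝒴₂ => margXY Q₂ p.1 p.2)
    (m₁ := fun p => margY Q₁ p.2) (m₂ := fun p => margY Q₂ p.2)
    (by rw [Fintype.sum_prod_type, sum_margXY h₁]) (by rw [Fintype.sum_prod_type, sum_margXY h₂])
    (fun p => ne_zero_of_le (margXY_nonneg h₁ _ _) (margXY_le_margY h₁ _ _))
    (fun p => ne_zero_of_le (margXY_nonneg h₂ _ _) (margXY_le_margY h₂ _ _))
  rw [hX_Y, sum_regroup₂]
  simp only [hX_Y, margXY_prodD, margY_prodD, ← neg_add]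
  congr 1
  refine Eq.trans h ?_
  simp only [Fintype.sum_prod_type]

lemma miXY_prodD (h₁ : IsDist Q₁) (h₂ : IsDist Q₂) :
    miXY (prodD Q₁ Q₂) = miXY Q₁ + miXY Q₂ := by
  have h := sum_mul_log_prod (q₁ := fun p : 𝒳₁ × 𝒴₁ => margXY Q₁ p.1 p.2)
    (q₂ := fun p : 𝒳₂ × 𝒴₂ => margXY Q₂ p.1 p.2)
    (m₁ := fun p => margX Q₁ p.1 * margY Q₁ p.2) (m₂ := fun p => margX Q₂ p.1 * margY Q₂ p.2)
    (by rw [Fintype.sum_prod_type, sum_margXY h₁]) (by rw [Fintype.sum_prod_type, sum_margXY h₂])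
    (fun p hp => mul_ne_zero
      (ne_zero_of_le (margXY_nonneg h₁ _ _) (margXY_le_margX h₁ _ _) hp)
      (ne_zero_of_le (margXY_nonneg h₁ _ _) (margXY_le_margY h₁ _ _) hp))
    (fun p hp => mul_ne_zero
      (ne_zero_of_le (margXY_nonneg h₂ _ _) (margXY_le_margX h₂ _ _) hp)
      (ne_zero_of_le (margXY_nonneg h₂ _ _) (margXY_le_margY h₂ _ _) hp))
  rw [miXY, sum_regroup₂]
  simp only [miXY, margXY_prodD, margX_prodD, margY_prodD]
  simp only [mul_mul_mul_comm (margX Q₁ _) (margX Q₂ _)]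
  refine Eq.trans h ?_
  simp only [Fintype.sum_prod_type]

/-! ### Subadditivity of conditional entropy -/

/-- The law of the first system. -/
noncomputable def fstM (Q : (𝒳₁ × 𝒳₂) × (𝒴₁ × 𝒴₂) × 𝒵₁ × 𝒵₂ → ℝ) : 𝒳₁ × 𝒴₁ × 𝒵₁ → ℝ :=
  fun p => ∑ q : 𝒳₂ × 𝒴₂ × 𝒵₂, Q ((p.1, q.1), (p.2.1, q.2.1), (p.2.2, q.2.2))

/-- The law of the second system. -/
noncomputable def sndM (Q : (𝒳₁ × 𝒳₂) × (𝒴₁ × 𝒴₂) × 𝒵₁ × 𝒵₂ → ℝ) : 𝒳₂ × 𝒴₂ × 𝒵₂ → ℝ :=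
  fun q => ∑ p : 𝒳₁ × 𝒴₁ × 𝒵₁, Q ((p.1, q.1), (p.2.1, q.2.1), (p.2.2, q.2.2))

variable {Q : (𝒳₁ × 𝒳₂) × (𝒴₁ × 𝒴₂) × 𝒵₁ × 𝒵₂ → ℝ}

lemma sum_joint (hQ : IsDist Q) : ∑ p : 𝒳₁ × 𝒴₁ × 𝒵₁, ∑ q : 𝒳₂ × 𝒴₂ × 𝒵₂,
    Q ((p.1, q.1), (p.2.1, q.2.1), (p.2.2, q.2.2)) = 1 := by
  rw [← sum_regroup₃ fun x y z => Q (x, y, z), ← hQ.2,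
    Fintype.sum_prod_type (f := Q)]
  exact Finset.sum_congr rfl fun x _ => (Fintype.sum_prod_type (f := fun w => Q (x, w))).symm

lemma isDist_fstM (hQ : IsDist Q) : IsDist (fstM Q) :=
  ⟨fun _ => Finset.sum_nonneg fun _ _ => hQ.1 _, sum_joint hQ⟩

lemma isDist_sndM (hQ : IsDist Q) : IsDist (sndM Q) :=
  ⟨fun _ => Finset.sum_nonneg fun _ _ => hQ.1 _, by
    rw [← sum_joint hQ]; exact Finset.sum_comm⟩

lemma margXY_fstM (x : 𝒳₁) (y : 𝒴₁) :
    margXY (fstM Q) x y = ∑ x' : 𝒳₂, ∑ y' : 𝒴₂, margXY Q (x, x') (y, y') := by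
  simp only [margXY, fstM, Fintype.sum_prod_type]
  rw [Finset.sum_comm]
  refine Finset.sum_congr rfl fun _ _ => ?_
  rw [Finset.sum_comm]

lemma margXZ_fstM (x : 𝒳₁) (z : 𝒵₁) :
    margXZ (fstM Q) x z = ∑ x' : 𝒳₂, ∑ z' : 𝒵₂, margXZ Q (x, x') (z, z') := by
  simp only [margXZ, fstM, Fintype.sum_prod_type]
  rw [Finset.sum_comm]
  refine Finset.sum_congr rfl fun _ _ => ?_
  refine Eq.trans ?_ Finset.sum_comm
  exact Finset.sum_congr rfl fun _ _ => Finset.sum_comm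

lemma margXY_sndM (x : 𝒳₂) (y : 𝒴₂) :
    margXY (sndM Q) x y = ∑ x' : 𝒳₁, ∑ y' : 𝒴₁, margXY Q (x', x) (y', y) := by
  simp only [margXY, sndM, Fintype.sum_prod_type]
  rw [Finset.sum_comm]
  refine Finset.sum_congr rfl fun _ _ => ?_
  rw [Finset.sum_comm]
  exact Finset.sum_congr rfl fun _ _ => Finset.sum_comm

lemma margXZ_sndM (x : 𝒳₂) (z : 𝒵₂) :
    margXZ (sndM Q) x z = ∑ x' : 𝒳₁, ∑ z' : 𝒵₁, margXZ Q (x', x) (z', z) := by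
  simp only [margXZ, sndM, Fintype.sum_prod_type]
  rw [Finset.sum_comm]
  refine Finset.sum_congr rfl fun _ _ => ?_
  rw [Finset.sum_comm]
  refine Eq.trans ?_ Finset.sum_comm
  exact Finset.sum_congr rfl fun _ _ => Finset.sum_comm

lemma fstM_mem_ΔP (h₂ : IsDist P₂) (hQ : Q ∈ ΔP (prodD P₁ P₂)) : fstM Q ∈ ΔP P₁ := by
  refine ⟨isDist_fstM hQ.1, fun x y => ?_, fun x z => ?_⟩
  · simp only [margXY_fstM, hQ.2.1, margXY_prodD, ← Finset.mul_sum, sum_margXY h₂, mul_one]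
  · simp only [margXZ_fstM, hQ.2.2, margXZ_prodD, ← Finset.mul_sum, sum_margXZ h₂, mul_one]

lemma sndM_mem_ΔP (h₁ : IsDist P₁) (hQ : Q ∈ ΔP (prodD P₁ P₂)) : sndM Q ∈ ΔP P₂ := by
  refine ⟨isDist_sndM hQ.1, fun x y => ?_, fun x z => ?_⟩
  · simp only [margXY_sndM, hQ.2.1, margXY_prodD, ← Finset.sum_mul, sum_margXY h₁, one_mul]
  · simp only [margXZ_sndM, hQ.2.2, margXZ_prodD, ← Finset.sum_mul, sum_margXZ h₁, one_mul]

lemma sum_cond_le_one {Q : 𝒳 × 𝒴 × 𝒵 → ℝ} (y : 𝒴) (z : 𝒵) :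
    ∑ x, Q (x, y, z) / margYZ Q y z ≤ 1 := by
  rw [← Finset.sum_div]
  exact div_self_le_one (margYZ Q y z)

/-- Subadditivity `H_Q(X₁X₂|Y₁Y₂Z₁Z₂) ≤ H_Q(X₁|Y₁Z₁) + H_Q(X₂|Y₂Z₂)`, by Gibbs' inequality applied
to `Q` and `margYZ Q` times the product of the two conditional laws. -/
lemma hX_YZ_le (hQ : IsDist Q) : hX_YZ Q ≤ hX_YZ (fstM Q) + hX_YZ (sndM Q) := by
  have d₁ := isDist_fstM hQ
  have d₂ := isDist_sndM hQ
  set J : 𝒳₁ × 𝒴₁ × 𝒵₁ → 𝒳₂ × 𝒴₂ × 𝒵₂ → ℝ :=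
    fun p q => Q ((p.1, q.1), (p.2.1, q.2.1), (p.2.2, q.2.2)) with hJ
  set M : 𝒳₁ × 𝒴₁ × 𝒵₁ → 𝒳₂ × 𝒴₂ × 𝒵₂ → ℝ :=
    fun p q => margYZ Q (p.2.1, q.2.1) (p.2.2, q.2.2) with hM
  set r₁ : 𝒳₁ × 𝒴₁ × 𝒵₁ → ℝ := fun p => fstM Q p / margYZ (fstM Q) p.2.1 p.2.2 with hr₁
  set r₂ : 𝒳₂ × 𝒴₂ × 𝒵₂ → ℝ := fun q => sndM Q q / margYZ (sndM Q) q.2.1 q.2.2 with hr₂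
  have e : hX_YZ Q = -∑ p, ∑ q, J p q * Real.log (J p q / M p q) := by
    rw [hX_YZ, sum_regroup₃]
  have e₁ : hX_YZ (fstM Q) = -∑ p, ∑ q, J p q * Real.log (r₁ p) := by
    simp only [← Finset.sum_mul]
    simp only [hX_YZ, Fintype.sum_prod_type (α₁ := 𝒳₁), Fintype.sum_prod_type (α₁ := 𝒴₁)]
    rfl
  have e₂ : hX_YZ (sndM Q) = -∑ p, ∑ q, J p q * Real.log (r₂ q) := by
    rw [Finset.sum_comm]
    simp only [← Finset.sum_mul]
    simp only [hX_YZ, Fintype.sum_prod_type (α₁ := 𝒳₂), Fintype.sum_prod_type (α₁ := 𝒴₂)]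
    rfl
  have r₁_nonneg : ∀ p, 0 ≤ r₁ p := fun p => div_nonneg (d₁.1 p) (margYZ_nonneg d₁ _ _)
  have r₂_nonneg : ∀ p, 0 ≤ r₂ p := fun p => div_nonneg (d₂.1 p) (margYZ_nonneg d₂ _ _)
  have key : ∀ p q, J p q - M p q * (r₁ p * r₂ q) ≤
      J p q * Real.log (J p q / M p q) - J p q * Real.log (r₁ p) - J p q * Real.log (r₂ q) := by
    intro p q
    rcases (hQ.1 ((p.1, q.1), (p.2.1, q.2.1), (p.2.2, q.2.2))).eq_or_lt with h0 | h0
    · have h0' : J p q = 0 := h0.symm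
      have hM0 : 0 ≤ M p q := margYZ_nonneg hQ _ _
      have := mul_nonneg hM0 (mul_nonneg (r₁_nonneg p) (r₂_nonneg q))
      simp only [h0', zero_mul]
      linarith
    · replace h0 : 0 < J p q := h0
      have hMp : 0 < M p q := h0.trans_le (le_margYZ hQ _ _ _)
      have hf : 0 < fstM Q p := h0.trans_le
        (Finset.single_le_sum (f := fun q => J p q) (fun _ _ => hQ.1 _) (Finset.mem_univ q))
      have hs : 0 < sndM Q q := h0.trans_le
        (Finset.single_le_sum (f := fun p => J p q) (fun _ _ => hQ.1 _) (Finset.mem_univ p))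
      have h1 : 0 < r₁ p := div_pos hf (hf.trans_le (le_margYZ d₁ _ _ _))
      have h2 : 0 < r₂ q := div_pos hs (hs.trans_le (le_margYZ d₂ _ _ _))
      -- `log t ≥ 1 - t⁻¹` at `t = J / (M r₁ r₂)`
      have h3 := Real.one_sub_inv_le_log_of_pos
        (div_pos (div_pos h0 hMp) (mul_pos h1 h2))
      rw [Real.log_div (div_pos h0 hMp).ne' (mul_pos h1 h2).ne',
        Real.log_mul h1.ne' h2.ne'] at h3
      have h4 := mul_le_mul_of_nonneg_left h3 h0.le
      have h5 : J p q * (1 - (J p q / M p q / (r₁ p * r₂ q))⁻¹) =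
          J p q - M p q * (r₁ p * r₂ q) := by
        field_simp
      linarith
  have hsum := Finset.sum_le_sum fun p (_ : p ∈ Finset.univ) =>
    Finset.sum_le_sum fun q (_ : q ∈ Finset.univ) => key p q
  simp only [Finset.sum_sub_distrib] at hsum
  have hJ1 : ∑ p, ∑ q, J p q = 1 := sum_joint hQ
  have hM1 : ∑ p, ∑ q, M p q * (r₁ p * r₂ q) ≤ 1 := by
    have h := sum_regroup₃ (fun (x : 𝒳₁ × 𝒳₂) (y : 𝒴₁ × 𝒴₂) (z : 𝒵₁ × 𝒵₂) =>
      margYZ Q y z * (r₁ (x.1, y.1, z.1) * r₂ (x.2, y.2, z.2)))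
    have h' : ∑ p, ∑ q, M p q * (r₁ p * r₂ q) = ∑ y : 𝒴₁ × 𝒴₂, ∑ z : 𝒵₁ × 𝒵₂, margYZ Q y z *
        ((∑ x, r₁ (x, y.1, z.1)) * ∑ x, r₂ (x, y.2, z.2)) := by
      refine Eq.trans h.symm ?_
      rw [Finset.sum_comm]
      refine Finset.sum_congr rfl fun y _ => ?_
      rw [Finset.sum_comm]
      refine Finset.sum_congr rfl fun z _ => ?_
      rw [← Finset.mul_sum, Fintype.sum_mul_sum, Fintype.sum_prod_type]
    rw [h', ← sum_margYZ hQ]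
    refine Finset.sum_le_sum fun y _ => Finset.sum_le_sum fun z _ => ?_
    refine mul_le_of_le_one_right (margYZ_nonneg hQ _ _) (mul_le_one₀ (sum_cond_le_one _ _)
      (Finset.sum_nonneg fun _ _ => r₂_nonneg _) (sum_cond_le_one _ _))
  rw [e, e₁, e₂]
  linarith

lemma maxH_prod (h₁ : IsDist P₁) (h₂ : IsDist P₂) :
    maxH (prodD P₁ P₂) = maxH P₁ + maxH P₂ := by
  have L₁ := isLUB_maxH h₁
  have L₂ := isLUB_maxH h₂
  have L := isLUB_maxH (isDist_prodD h₁ h₂)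
  apply le_antisymm
  · refine L.2 ?_
    rintro _ ⟨Q, hQ, rfl⟩
    exact (hX_YZ_le hQ.1).trans (add_le_add (L₁.1 ⟨_, fstM_mem_ΔP h₂ hQ, rfl⟩)
      (L₂.1 ⟨_, sndM_mem_ΔP h₁ hQ, rfl⟩))
  · refine (L₁.add L₂).2 ?_
    rintro _ ⟨_, ⟨Q₁, hQ₁, rfl⟩, _, ⟨Q₂, hQ₂, rfl⟩, rfl⟩
    exact L.1 ⟨prodD Q₁ Q₂, prodD_mem_ΔP hQ₁ hQ₂, hX_YZ_prodD hQ₁.1 hQ₂.1⟩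

end Product

/-- additivity of `S̃I`, `C̃I` and `ŨI` on independent systems. -/
theorem stmt15 {𝒳₁ 𝒴₁ 𝒵₁ 𝒳₂ 𝒴₂ 𝒵₂ : Type*}
    [Fintype 𝒳₁] [Fintype 𝒴₁] [Fintype 𝒵₁] [Fintype 𝒳₂] [Fintype 𝒴₂] [Fintype 𝒵₂]
    [Nonempty 𝒳₁] [Nonempty 𝒴₁] [Nonempty 𝒵₁] [Nonempty 𝒳₂] [Nonempty 𝒴₂] [Nonempty 𝒵₂]
    (P₁ : 𝒳₁ × 𝒴₁ × 𝒵₁ → ℝ) (P₂ : 𝒳₂ × 𝒴₂ × 𝒵₂ → ℝ)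
    (hP₁ : IsDist P₁) (hP₂ : IsDist P₂)
    (P : (𝒳₁ × 𝒳₂) × (𝒴₁ × 𝒴₂) × 𝒵₁ × 𝒵₂ → ℝ)
    (hP : ∀ x₁ x₂ y₁ y₂ z₁ z₂,
      P ((x₁, x₂), (y₁, y₂), z₁, z₂) = P₁ (x₁, y₁, z₁) * P₂ (x₂, y₂, z₂)) :
    SI P = SI P₁ + SI P₂ ∧ CI P = CI P₁ + CI P₂ ∧
    UIY P = UIY P₁ + UIY P₂ ∧ UIZ P = UIZ P₁ + UIZ P₂ := by
  obtain rfl : P = prodD P₁ P₂ := by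
    funext ⟨⟨x₁, x₂⟩, ⟨y₁, y₂⟩, z₁, z₂⟩
    exact hP x₁ x₂ y₁ y₂ z₁ z₂
  have hD := isDist_prodD hP₁ hP₂
  rw [SI_eq hD, SI_eq hP₁, SI_eq hP₂, CI_eq hD, CI_eq hP₁, CI_eq hP₂, UIY_eq hD, UIY_eq hP₁,
    UIY_eq hP₂, UIZ_eq hD, UIZ_eq hP₁, UIZ_eq hP₂, maxH_prod hP₁ hP₂, hX_YZ_prodD hP₁ hP₂,
    hX_Z_prodD hP₁ hP₂, hX_Y_prodD hP₁ hP₂, miXY_prodD hP₁ hP₂]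
  refine ⟨?_, ?_, ?_, ?_⟩ <;> ring

end PID
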